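/- arXiv:1908.02193 — 3 statements merged into one kernel-verified Lean document; each statement's English description precedes it below -/
import Mathlib

section
/- Fix n ∈ ℕ with n ≥ 1 and c ∈ ℝ. For every ρ ∈ (0,1), the function ρ ↦ H_n(ρ,c) is differentiable at ρ with derivative H_n'(ρ,c) = ∫_ℝ n·Φ(d(ρ,c,z))^{n−1}·φ(d(ρ,c,z))·G(ρ,c,z)·φ(z) dz, where G(ρ,c,z) = (c + z/√ρ)/(2(1−ρ)^{3/2}). -/
open MeasureTheory Filter

/-- The standard normal density. -/
noncomputable def phi (x : ℝ) : ℝ := (Real.sqrt (2 * Real.pi))⁻¹ * Real.exp (-x ^ 2 / 2)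

/-- The standard normal cumulative distribution function. -/
noncomputable def Phi (x : ℝ) : ℝ := ∫ t in Set.Iic x, phi t

/-- d(ρ,c,z) = (c + √ρ·z)/√(1−ρ). -/
noncomputable def dd (ρ c z : ℝ) : ℝ := (c + Real.sqrt ρ * z) / Real.sqrt (1 - ρ)

/-- G(ρ,c,z) = (c + z/√ρ)/(2(1−ρ)^{3/2}). -/
noncomputable def G (ρ c z : ℝ) : ℝ :=
  (c + z / Real.sqrt ρ) / (2 * (1 - ρ) ^ ((3 : ℝ) / 2))

/-- H_n(ρ,c) = ∫ Φ(d(ρ,c,z))^n φ(z) dz. -/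
noncomputable def Hn (n : ℕ) (ρ c : ℝ) : ℝ := ∫ z : ℝ, (Phi (dd ρ c z)) ^ n * phi z

lemma phi_cont : Continuous phi := by unfold phi; fun_prop

lemma phi_eq : phi = ProbabilityTheory.gaussianPDFReal 0 1 := by
  funext x
  simp [phi, ProbabilityTheory.gaussianPDFReal]

lemma phi_int : Integrable phi := by
  rw [phi_eq]; exact ProbabilityTheory.integrable_gaussianPDFReal 0 1

lemma phi_nonneg (x : ℝ) : 0 ≤ phi x := by unfold phi; positivity

lemma phi_le_one (x : ℝ) : phi x ≤ 1 := by
  unfold phi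
  have h1 : (Real.sqrt (2 * Real.pi))⁻¹ ≤ 1 := by
    apply inv_le_one_of_one_le₀
    rw [Real.one_le_sqrt]
    linarith [Real.pi_gt_three]
  have h2 : Real.exp (-x ^ 2 / 2) ≤ 1 := by
    rw [Real.exp_le_one_iff]
    nlinarith [sq_nonneg x]
  exact mul_le_one₀ h1 (Real.exp_pos _).le h2

lemma Phi_nonneg (x : ℝ) : 0 ≤ Phi x := integral_nonneg fun t => phi_nonneg t

lemma Phi_le_one (x : ℝ) : Phi x ≤ 1 := by
  have h : ∫ t, phi t = 1 := by
    rw [phi_eq]; exact ProbabilityTheory.integral_gaussianPDFReal_eq_one 0 one_ne_zero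
  rw [← h]
  exact setIntegral_le_integral phi_int (Eventually.of_forall phi_nonneg)

lemma Phi_deriv (x : ℝ) : HasDerivAt Phi (phi x) x := by
  have h : Phi = fun x => Phi 0 + ∫ t in (0:ℝ)..x, phi t := by
    funext x
    have := intervalIntegral.integral_Iic_sub_Iic (f := phi) (μ := volume) (a := 0) (b := x)
      phi_int.integrableOn phi_int.integrableOn
    unfold Phi
    linarith
  rw [h]
  exact (intervalIntegral.integral_hasDerivAt_right (phi_cont.intervalIntegrable _ _)
    (phi_cont.stronglyMeasurableAtFilter _ _) phi_cont.continuousAt).const_add _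

lemma Phi_cont : Continuous Phi :=
  continuous_iff_continuousAt.2 fun x => (Phi_deriv x).continuousAt

lemma absmul_phi_int : Integrable (fun z : ℝ => |z| * phi z) := by
  have h := (integrable_mul_exp_neg_mul_sq (b := 1/2) (by norm_num)).norm.const_mul
    (Real.sqrt (2 * Real.pi))⁻¹
  refine h.congr (Eventually.of_forall fun z => ?_)
  simp only [norm_mul, Real.norm_eq_abs, Real.abs_exp, phi]
  rw [show -(1/2) * z ^ 2 = -z ^ 2 / 2 by ring]
  ring

lemma rpow_three_half {x : ℝ} (hx : 0 < x) : x ^ ((3 : ℝ) / 2) = x * Real.sqrt x := by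
  rw [Real.sqrt_eq_rpow, show (3 : ℝ) / 2 = 1 + 1 / 2 by norm_num, Real.rpow_add hx, Real.rpow_one]

lemma dd_deriv (c z r : ℝ) (h0 : 0 < r) (h1 : r < 1) :
    HasDerivAt (fun r => dd r c z) (G r c z) r := by
  have h1' : 0 < 1 - r := by linarith
  have a := ((Real.hasDerivAt_sqrt h0.ne').mul_const z).const_add c
  have b : HasDerivAt (fun r => Real.sqrt (1 - r)) (1 / (2 * Real.sqrt (1 - r)) * (-1)) r :=
    (Real.hasDerivAt_sqrt h1'.ne').comp r ((hasDerivAt_id r).const_sub 1)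
  have hs := Real.sqrt_pos.2 h0
  have ht := Real.sqrt_pos.2 h1'
  have e := a.div b ht.ne'
  unfold dd
  refine e.congr_deriv ?_
  unfold G
  rw [rpow_three_half h1']
  have hs2 := Real.sq_sqrt h0.le
  have ht2 := Real.sq_sqrt h1'.le
  generalize Real.sqrt r = s at *
  generalize Real.sqrt (1 - r) = t at *
  rw [← ht2]
  have : s ^ 2 + t ^ 2 = 1 := by linarith
  field_simp
  linear_combination z * this

lemma dd_cont (r c : ℝ) : Continuous (dd r c) := by unfold dd; fun_prop

lemma G_cont (r c : ℝ) : Continuous (G r c) := by unfold G; fun_prop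

lemma G_bound (ρ c z r : ℝ) (h0 : 0 < ρ) (h1 : ρ < 1) (hr : r ∈ Set.Ioo (ρ / 2) ((1 + ρ) / 2)) :
    |G r c z| ≤ (|c| + |z| / Real.sqrt (ρ / 2)) / (2 * (1 - (1 + ρ) / 2) ^ ((3 : ℝ) / 2)) := by
  obtain ⟨ha, hb⟩ := hr
  have p1 : 0 < 1 - (1 + ρ) / 2 := by linarith
  have p2 : 0 < 1 - r := by linarith
  have p3 : 0 < Real.sqrt (ρ / 2) := Real.sqrt_pos.2 (by linarith)
  have p4 := Real.rpow_pos_of_pos p1 ((3 : ℝ) / 2)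
  have p5 := Real.rpow_pos_of_pos p2 ((3 : ℝ) / 2)
  unfold G
  rw [abs_div, abs_of_pos (by positivity : 0 < 2 * (1 - r) ^ ((3 : ℝ) / 2))]
  have n1 : |c + z / Real.sqrt r| ≤ |c| + |z| / Real.sqrt (ρ / 2) := by
    refine (abs_add_le _ _).trans ?_
    rw [abs_div, abs_of_nonneg (Real.sqrt_nonneg r)]
    gcongr
  have n2 : (1 - (1 + ρ) / 2) ^ ((3 : ℝ) / 2) ≤ (1 - r) ^ ((3 : ℝ) / 2) :=
    Real.rpow_le_rpow p1.le (by linarith) (by norm_num)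
  exact div_le_div₀ (by positivity) n1 (by positivity) (by linarith)

theorem hasDerivAt_Hn (n : ℕ) (hn : 1 ≤ n) (c : ℝ) (ρ : ℝ) (hρ : ρ ∈ Set.Ioo (0:ℝ) 1) :
    HasDerivAt (fun r => Hn n r c)
      (∫ z : ℝ, (n : ℝ) * (Phi (dd ρ c z)) ^ (n - 1) * phi (dd ρ c z) * G ρ c z * phi z) ρ := by
  obtain ⟨h0, h1⟩ := hρ
  have cP : ∀ r, Continuous fun z => Phi (dd r c z) := fun r => Phi_cont.comp (dd_cont r c)
  have cF : ∀ r, Continuous fun z => (Phi (dd r c z)) ^ n * phi z := fun r =>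
    ((cP r).pow n).mul phi_cont
  unfold Hn
  refine (hasDerivAt_integral_of_dominated_loc_of_deriv_le
    (s := Set.Ioo (ρ / 2) ((1 + ρ) / 2))
    (F := fun r z => (Phi (dd r c z)) ^ n * phi z)
    (F' := fun r z => (n : ℝ) * (Phi (dd r c z)) ^ (n - 1) * phi (dd r c z) * G r c z * phi z)
    (bound := fun z => (n : ℝ) * ((|c| + |z| / Real.sqrt (ρ / 2)) /
      (2 * (1 - (1 + ρ) / 2) ^ ((3 : ℝ) / 2))) * phi z)
    (Ioo_mem_nhds (by linarith) (by linarith))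
    (Eventually.of_forall fun r => (cF r).aestronglyMeasurable) ?_ ?_ ?_ ?_ ?_).2
  · refine phi_int.mono' (cF ρ).aestronglyMeasurable (Eventually.of_forall fun z => ?_)
    rw [Real.norm_eq_abs, abs_mul, abs_of_nonneg (phi_nonneg z),
      abs_of_nonneg (pow_nonneg (Phi_nonneg _) n)]
    exact mul_le_of_le_one_left (phi_nonneg z) (pow_le_one₀ (Phi_nonneg _) (Phi_le_one _))
  · exact ((((continuous_const.mul ((cP ρ).pow (n - 1))).mul (phi_cont.comp (dd_cont ρ c))).mul
      (G_cont ρ c)).mul phi_cont).aestronglyMeasurable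
  · refine Eventually.of_forall fun z r hr => ?_
    have hG := G_bound ρ c z r h0 h1 hr
    have a := phi_nonneg z
    have b := phi_nonneg (dd r c z)
    have b' := phi_le_one (dd r c z)
    have d := pow_nonneg (Phi_nonneg (dd r c z)) (n - 1)
    have d' := pow_le_one₀ (n := n - 1) (Phi_nonneg (dd r c z)) (Phi_le_one _)
    rw [Real.norm_eq_abs, abs_mul, abs_mul, abs_mul, abs_mul, abs_of_nonneg a, abs_of_nonneg b,
      abs_of_nonneg d, Nat.abs_cast]
    have e : (n : ℝ) * Phi (dd r c z) ^ (n - 1) * phi (dd r c z) ≤ n := by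
      rw [mul_assoc]
      exact mul_le_of_le_one_right (Nat.cast_nonneg n) (mul_le_one₀ d' b b')
    exact mul_le_mul_of_nonneg_right
      (mul_le_mul e hG (abs_nonneg _) (Nat.cast_nonneg n)) a
  · have := ((phi_int.const_mul |c|).add (absmul_phi_int.const_mul (Real.sqrt (ρ / 2))⁻¹)).const_mul
      ((n : ℝ) * (2 * (1 - (1 + ρ) / 2) ^ ((3 : ℝ) / 2))⁻¹)
    refine this.congr (Eventually.of_forall fun z => ?_)
    simp only [Pi.add_apply, div_eq_mul_inv]
    ring
  · refine Eventually.of_forall fun z r hr => ?_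
    have e := dd_deriv c z r (by linarith [hr.1]) (by linarith [hr.2])
    have f := (((Phi_deriv (dd r c z)).comp r e).pow n).mul_const (phi z)
    refine f.congr_deriv ?_
    simp only [Function.comp]
    ring
end

section
/- Fix ρ ∈ (0,1) and α ∈ (0,1). Let (α_n) be a sequence in (0,1) with n·α_n → α, and let c_n be defined by Φ(−c_n) = α_n. Then n·c_n·∫_ℝ Φ(d(ρ,c_n,z))^{n−1}·φ(d(ρ,c_n,z))·φ(z) dz → 0 as n → ∞. -/
open MeasureTheory Filter

lemma phi_pos (x : ℝ) : 0 < phi x := by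
  unfold phi; positivity

lemma phi_int_one : ∫ x, phi x = 1 := by
  rw [phi_eq]; exact ProbabilityTheory.integral_gaussianPDFReal_eq_one 0 one_ne_zero

lemma phi_neg (x : ℝ) : phi (-x) = phi x := by simp [phi]

lemma phi_mom : Integrable (fun x => x ^ 4 * phi x) := by
  have h := (integrable_rpow_mul_exp_neg_mul_sq (b := 1/2) (by norm_num) (s := 4) (by norm_num)).const_mul
    (Real.sqrt (2 * Real.pi))⁻¹
  refine h.congr (Eventually.of_forall fun x => ?_)
  have : x ^ (4:ℝ) = x ^ (4:ℕ) := by exact_mod_cast Real.rpow_natCast x 4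
  simp only [this, phi]
  rw [show -(1/2) * x ^ 2 = -x^2/2 by ring]; ring

lemma Phi_mono : Monotone Phi := by
  intro x y h
  exact setIntegral_mono_set phi_int.integrableOn
    (Eventually.of_forall fun x => (phi_pos x).le)
    (Set.Iic_subset_Iic.2 h).eventuallyLE

lemma Phi_add (x : ℝ) : Phi x + Phi (-x) = 1 := by
  have h1 : Phi (-x) = ∫ t in Set.Ioi x, phi t := by
    have := integral_comp_neg_Ioi x phi
    simp only [phi_neg] at this
    rw [this, Phi]
  rw [h1, Phi, ← phi_int_one, ← Set.compl_Iic]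
  exact integral_add_compl measurableSet_Iic phi_int

lemma Phi_shift (x a : ℝ) (ha : 0 ≤ a) : Phi (x - a) ≤ Phi x * Real.exp (x * a) := by
  have h1 : Phi (x - a) = ∫ u in Set.Iic x, phi (u - a) := by
    have h := (measurePreserving_sub_right (volume : Measure ℝ) a).setIntegral_preimage_emb
      (MeasurableEquiv.subRight a).measurableEmbedding phi (Set.Iic (x - a))
    rw [Phi, ← h]
    congr 2
    ext u; simp
  rw [h1, Phi, ← integral_mul_const]
  refine setIntegral_mono_on (phi_int.comp_sub_right a).integrableOn
    (phi_int.mul_const _).integrableOn measurableSet_Iic fun u hu => ?_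
  have hu : u ≤ x := hu
  unfold phi
  rw [mul_assoc, ← Real.exp_add]
  gcongr
  nlinarith [mul_le_mul_of_nonneg_right hu ha]

lemma phi_le (c : ℝ) (hc : 1 ≤ c) : phi c ≤ Real.exp (3/2) * c * Phi (-c) := by
  have hc0 : 0 < c := by linarith
  have hb : phi (c + 1/c) * (1/c) ≤ Phi (-c) := by
    have h1 : ∫ t in Set.Ioc (-c - 1/c) (-c), phi (c + 1/c) ≤ ∫ t in Set.Ioc (-c - 1/c) (-c), phi t := by
      refine setIntegral_mono_on (by simp) phi_int.integrableOn measurableSet_Ioc fun u hu => ?_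
      obtain ⟨h1, h2⟩ := hu
      have : 0 < 1 / c := by positivity
      unfold phi
      refine mul_le_mul_of_nonneg_left (Real.exp_le_exp.2 ?_) (by positivity)
      nlinarith
    have h2 : ∫ t in Set.Ioc (-c - 1/c) (-c), phi t ≤ Phi (-c) :=
      setIntegral_mono_set phi_int.integrableOn
        (Eventually.of_forall fun x => (phi_pos x).le)
        Set.Ioc_subset_Iic_self.eventuallyLE
    refine le_trans (le_of_eq ?_) (h1.trans h2)
    have : 0 ≤ c⁻¹ := by positivity
    simp [this, mul_comm]
  have h3 : phi c ≤ Real.exp (3/2) * phi (c + 1/c) := by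
    unfold phi
    rw [mul_left_comm, ← Real.exp_add]
    gcongr
    have h4 : (c + 1/c)^2 = c^2 + 2 + (1/c)^2 := by field_simp; ring
    have h5 : 1/c ≤ 1 := by rw [div_le_one hc0]; exact hc
    have h6 : 0 < 1/c := by positivity
    rw [h4]; nlinarith
  calc phi c ≤ Real.exp (3/2) * phi (c + 1/c) := h3
    _ = Real.exp (3/2) * c * (phi (c + 1/c) * (1/c)) := by field_simp
    _ ≤ _ := by gcongr

lemma phi_prod (ρ c z : ℝ) (h0 : 0 < ρ) (h1 : ρ < 1) :
    phi (dd ρ c z) * phi z = phi c * phi ((z + √ρ * c) / √(1-ρ)) := by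
  have hb : 0 < √(1-ρ) := Real.sqrt_pos.2 (by linarith)
  have hb2 : √(1-ρ)^2 = 1 - ρ := Real.sq_sqrt (by linarith)
  have hs2 : √ρ^2 = ρ := Real.sq_sqrt h0.le
  have hne : (1 - ρ) ≠ 0 := by linarith
  unfold phi dd
  rw [mul_mul_mul_comm, mul_mul_mul_comm _ (Real.exp (-c^2/2)), ← Real.exp_add, ← Real.exp_add]
  congr 2
  rw [div_pow, div_pow, hb2]
  field_simp
  have : (c + √ρ * z)^2 = c^2 + 2 * c * √ρ * z + ρ * z^2 := by rw [← hs2]; simp; ring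
  have h' : (z + √ρ * c)^2 = z^2 + 2 * c * √ρ * z + ρ * c^2 := by rw [← hs2]; simp; ring
  rw [mul_comm c √ρ, this, h']; ring

lemma int_cov (f : ℝ → ℝ) (s b : ℝ) (hb : 0 < b) : ∫ z, f ((z + s) / b) = b * ∫ w, f w := by
  rw [integral_add_right_eq_self (fun z => f (z / b)) s, Measure.integral_comp_div]
  simp [abs_of_pos hb]

lemma main_bound (ρ : ℝ) (h0 : 0 < ρ) (h1 : ρ < 1) (κ : ℝ) (hκ : √(1-ρ) < κ) :
    ∃ M : ℝ, ∀ c : ℝ, 0 < c → ∀ m : ℕ,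
      ∫ z : ℝ, (Phi (dd ρ c z)) ^ m * phi (dd ρ c z) * phi z ≤
        phi c * (√(1-ρ) * (Phi (κ * c) ^ m + M / c ^ 4)) := by
  have hb : 0 < √(1-ρ) := Real.sqrt_pos.2 (by linarith)
  have hb2 : √(1-ρ)^2 = 1 - ρ := Real.sq_sqrt (by linarith)
  have hs : 0 < √ρ := Real.sqrt_pos.2 h0
  have hs2 : √ρ^2 = ρ := Real.sq_sqrt h0.le
  set δ := (κ - √(1-ρ)) / √ρ with hδ
  have hδ0 : 0 < δ := div_pos (by linarith) hs
  refine ⟨(∫ w, w ^ 4 * phi w) / δ ^ 4, fun c hc m => ?_⟩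
  let F : ℝ → ℝ := fun w => phi c * (Phi (κ * c) ^ m * phi w + (1 / (δ * c) ^ 4) * (w ^ 4 * phi w))
  have hF : Integrable F := ((phi_int.const_mul _).add (phi_mom.const_mul _)).const_mul _
  have hFint : ∫ w, F w = phi c * (Phi (κ * c) ^ m + (∫ w, w ^ 4 * phi w) / δ ^ 4 / c ^ 4) := by
    simp only [F]
    rw [integral_const_mul, integral_add (phi_int.const_mul _) (phi_mom.const_mul _),
      integral_const_mul, integral_const_mul, phi_int_one]
    field_simp
  have key := int_cov F (√ρ * c) _ hb
  rw [hFint] at key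
  calc _ ≤ ∫ z, F ((z + √ρ * c) / √(1-ρ)) := ?_
    _ = _ := by rw [key]; ring
  refine integral_mono_of_nonneg (Eventually.of_forall fun z => ?_) ?_ (Eventually.of_forall fun z => ?_)
  · have := Phi_nonneg (dd ρ c z)
    have := phi_pos (dd ρ c z)
    have := phi_pos z
    simp only [Pi.zero_apply]
    positivity
  · exact (hF.comp_div hb.ne').comp_add_right (√ρ * c)
  · simp only [F]
    rw [mul_assoc, phi_prod ρ c z h0 h1]
    set w := (z + √ρ * c) / √(1-ρ) with hw
    have hd : dd ρ c z = √(1-ρ) * c + √ρ * w := by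
      rw [hw, dd]; field_simp; rw [hb2]; linear_combination -c * hs2
    have hp := phi_pos c
    have hpw := phi_pos w
    have hPk := Phi_nonneg (κ * c)
    rw [mul_left_comm]
    refine mul_le_mul_of_nonneg_left ?_ hp.le
    by_cases hwc : w ≤ δ * c
    · have : dd ρ c z ≤ κ * c := by
        have e : √ρ * (δ * c) = (κ - √(1-ρ)) * c := by rw [hδ]; field_simp
        rw [hd]
        have := mul_le_mul_of_nonneg_left hwc hs.le
        rw [e] at this; linarith
      have h3 : Phi (dd ρ c z) ^ m ≤ Phi (κ * c) ^ m :=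
        pow_le_pow_left₀ (Phi_nonneg _) (Phi_mono this) m
      have h4 : 0 ≤ (1 / (δ * c) ^ 4) * (w ^ 4 * phi w) := by positivity
      nlinarith
    · have hwc := not_le.1 hwc
      have h3 : Phi (dd ρ c z) ^ m ≤ 1 := pow_le_one₀ (Phi_nonneg _) (Phi_le_one _)
      have h4 : 1 ≤ (1 / (δ * c) ^ 4) * w ^ 4 := by
        rw [one_div_mul_eq_div, one_le_div (by positivity)]
        exact pow_le_pow_left₀ (by positivity) hwc.le 4
      have h5 : 0 ≤ Phi (κ * c) ^ m * phi w := by positivity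
      nlinarith

theorem third_term_tendsto_zero
    (ρ : ℝ) (hρ : ρ ∈ Set.Ioo (0:ℝ) 1) (α : ℝ) (hα : α ∈ Set.Ioo (0:ℝ) 1)
    (αseq : ℕ → ℝ) (hαseq : ∀ n, αseq n ∈ Set.Ioo (0:ℝ) 1)
    (hlim : Tendsto (fun n : ℕ => (n : ℝ) * αseq n) atTop (nhds α))
    (c : ℕ → ℝ) (hc : ∀ n, Phi (-(c n)) = αseq n) :
    Tendsto (fun n : ℕ =>
        (n : ℝ) * c n *
          ∫ z : ℝ, (Phi (dd ρ (c n) z)) ^ (n - 1) * phi (dd ρ (c n) z) * phi z)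
      atTop (nhds 0) := by
  obtain ⟨h0, h1⟩ := hρ
  have hb : 0 < √(1-ρ) := Real.sqrt_pos.2 (by linarith)
  have hb1 : √(1-ρ) < 1 := by
    rw [Real.sqrt_lt' one_pos]; linarith
  obtain ⟨κ, hκ, hκ1⟩ := exists_between hb1
  have hκ0 : 0 < κ := hb.trans hκ
  obtain ⟨M, hM⟩ := main_bound ρ h0 h1 κ hκ
  have hα0 := hα.1
  -- `αseq` tends to zero
  have hα_zero : Tendsto αseq atTop (nhds 0) := by
    have h := hlim.mul (tendsto_inv_atTop_zero.comp (tendsto_natCast_atTop_atTop (R := ℝ)))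
    rw [mul_zero] at h
    refine h.congr' ?_
    filter_upwards [eventually_gt_atTop 0] with n hn
    have : (n:ℝ) ≠ 0 := by positivity
    simp only [Function.comp]
    field_simp
  have hPhi_pos : ∀ x, 1 ≤ x → 0 < Phi (-x) := by
    intro x hx
    have h := phi_le x hx
    have h2 := phi_pos x
    by_contra hcon
    have := mul_nonpos_of_nonneg_of_nonpos (a := Real.exp (3/2) * x) (by positivity) (not_lt.1 hcon)
    linarith
  have hcinf : Tendsto c atTop atTop := by
    rw [tendsto_atTop]
    intro b
    have hp := hPhi_pos (max b 1) (le_max_right _ _)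
    filter_upwards [hα_zero.eventually (gt_mem_nhds hp)] with n hn
    rw [← hc n] at hn
    by_contra hcon
    have hlt : -(max b 1) ≤ -(c n) := by
      have := le_max_left b 1
      linarith [not_le.1 hcon]
    linarith [Phi_mono hlt]
  set γ := κ * (1 - κ) with hγ
  have hγ0 : 0 < γ := mul_pos hκ0 (by linarith)
  set η := α * γ / 4 with hη
  have hη0 : 0 < η := by positivity
  let B : ℝ → ℝ := fun x => Real.exp (3/2) * (2 * α) * √(1-ρ) *
    (x ^ 2 * Real.exp (-η * x ^ 2) + M * (x ^ 2)⁻¹)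
  have hB : Tendsto B atTop (nhds 0) := by
    have hsq : Tendsto (fun x : ℝ => x ^ 2) atTop atTop := tendsto_pow_atTop two_ne_zero
    have e1 : Tendsto (fun y : ℝ => y * Real.exp (-η * y)) atTop (nhds 0) := by
      simpa using tendsto_rpow_mul_exp_neg_mul_atTop_nhds_zero 1 η hη0
    have := ((e1.comp hsq).add ((tendsto_inv_atTop_zero.comp hsq).const_mul M)).const_mul
      (Real.exp (3/2) * (2 * α) * √(1-ρ))
    simpa [B, Function.comp_def] using this
  refine squeeze_zero' ?_ ?_ (hB.comp hcinf)
  · filter_upwards [hcinf.eventually_ge_atTop 1] with n hn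
    have : 0 ≤ ∫ z : ℝ, (Phi (dd ρ (c n) z)) ^ (n - 1) * phi (dd ρ (c n) z) * phi z := by
      refine integral_nonneg fun z => ?_
      have := Phi_nonneg (dd ρ (c n) z)
      have := phi_pos (dd ρ (c n) z)
      have := phi_pos z
      simp only [Pi.zero_apply]
      positivity
    positivity
  · filter_upwards [hcinf.eventually_ge_atTop 1, eventually_ge_atTop 2,
      hlim.eventually (gt_mem_nhds (show α < 2 * α by linarith)),
      hlim.eventually (lt_mem_nhds (show α / 2 < α by linarith))] with n hn hn2 hu hl
    have hx0 : 0 < c n := by linarith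
    have hn2' : (2:ℝ) ≤ n := by exact_mod_cast hn2
    have hm : ((n - 1 : ℕ) : ℝ) = n - 1 := by
      rw [Nat.cast_sub (by omega)]; simp
    have hI := hM (c n) hx0 (n - 1)
    have hphi := phi_le (c n) hn
    rw [hc n] at hphi
    simp only [Function.comp, B]
    set x := c n with hx
    -- power bound
    have hP : Phi (κ * x) ^ (n - 1) ≤ Real.exp (-η * x ^ 2) := by
      have hs := Phi_shift (-(κ * x)) ((1 - κ) * x) (mul_nonneg (by linarith) hx0.le)
      rw [show -(κ * x) - (1 - κ) * x = -x by ring, hc n,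
        show -(κ * x) * ((1 - κ) * x) = -(γ * x ^ 2) by rw [hγ]; ring, Real.exp_neg,
        ← div_eq_mul_inv, le_div_iff₀ (Real.exp_pos _)] at hs
      have he : γ * x ^ 2 ≤ Real.exp (γ * x ^ 2) := by
        linarith [Real.add_one_le_exp (γ * x ^ 2)]
      have hsmall : αseq n * (γ * x ^ 2) ≤ Phi (-(κ * x)) :=
        (mul_le_mul_of_nonneg_left he (hαseq n).1.le).trans hs
      have hle : Phi (κ * x) ≤ Real.exp (-Phi (-(κ * x))) := by
        linarith [Phi_add (κ * x), Real.add_one_le_exp (-Phi (-(κ * x)))]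
      calc Phi (κ * x) ^ (n - 1) ≤ Real.exp (-Phi (-(κ * x))) ^ (n - 1) :=
            pow_le_pow_left₀ (Phi_nonneg _) hle _
        _ = Real.exp (((n - 1 : ℕ) : ℝ) * (-Phi (-(κ * x)))) := by rw [Real.exp_nat_mul]
        _ ≤ _ := by
          rw [Real.exp_le_exp, hm]
          have hg : 0 < γ * x ^ 2 := by positivity
          have a1 : (n / 2 : ℝ) * Phi (-(κ * x)) ≤ (n - 1) * Phi (-(κ * x)) :=
            mul_le_mul_of_nonneg_right (by linarith) (Phi_nonneg _)
          have a2 : (n / 2 : ℝ) * (αseq n * (γ * x ^ 2)) ≤ (n / 2 : ℝ) * Phi (-(κ * x)) :=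
            mul_le_mul_of_nonneg_left hsmall (by positivity)
          have a3 : α / 2 * (γ * x ^ 2) ≤ (n * αseq n) * (γ * x ^ 2) :=
            mul_le_mul_of_nonneg_right hl.le hg.le
          rw [hη]; nlinarith
    have hS0 : 0 ≤ phi x * (√(1-ρ) * (Phi (κ * x) ^ (n - 1) + M / x ^ 4)) := by
      refine le_trans (integral_nonneg fun z => ?_) hI
      have := Phi_nonneg (dd ρ x z)
      have := phi_pos (dd ρ x z)
      have := phi_pos z
      simp only [Pi.zero_apply]
      positivity
    have hS1 : 0 ≤ √(1-ρ) * (Phi (κ * x) ^ (n - 1) + M / x ^ 4) :=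
      nonneg_of_mul_nonneg_right hS0 (phi_pos x)
    have hnphi : n * x * phi x ≤ Real.exp (3/2) * (2 * α) * x ^ 2 := by
      calc n * x * phi x ≤ n * x * (Real.exp (3/2) * x * αseq n) := by gcongr
        _ = Real.exp (3/2) * (n * αseq n) * x ^ 2 := by ring
        _ ≤ _ := by gcongr
    calc _ ≤ n * x * (phi x * (√(1-ρ) * (Phi (κ * x) ^ (n - 1) + M / x ^ 4))) := by gcongr
      _ = n * x * phi x * (√(1-ρ) * (Phi (κ * x) ^ (n - 1) + M / x ^ 4)) := by ring
      _ ≤ Real.exp (3/2) * (2 * α) * x ^ 2 * (√(1-ρ) * (Phi (κ * x) ^ (n - 1) + M / x ^ 4)) := by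
        gcongr
      _ ≤ Real.exp (3/2) * (2 * α) * x ^ 2 * (√(1-ρ) * (Real.exp (-η * x ^ 2) + M / x ^ 4)) := by
        gcongr
      _ = _ := by field_simp
end

section
/- There exists a constant C > 0 such that for every integer n ≥ 2, ∫_0^1 |n·(n·t − 1)·(1−t)^{n−2}| dt ≤ C. -/
theorem integral_abs_fn_bounded :
    ∃ C > 0, ∀ n : ℕ, 2 ≤ n →
      (∫ t in (0:ℝ)..1, |(n : ℝ) * ((n : ℝ) * t - 1) * (1 - t) ^ (n - 2)|) ≤ C := by
  refine ⟨4, by norm_num, ?_⟩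
  intro n hn
  obtain ⟨m, rfl⟩ := Nat.exists_eq_add_of_le' hn
  simp only [Nat.add_sub_cancel]
  push_cast
  have hm : (0:ℝ) ≤ m := Nat.cast_nonneg m
  have hm1 : (m:ℝ) + 1 ≠ 0 := by positivity
  have key : (∫ t in (0:ℝ)..1, ((m:ℝ) + 2) * (((m:ℝ) + 2) * t + 1) * (1 - t) ^ m)
      = 2 * ((m:ℝ) + 2) / (m + 1) := by
    have hd : ∀ t ∈ Set.uIcc (0:ℝ) 1, HasDerivAt
        (fun t : ℝ => -((m:ℝ) + 2) * (((m:ℝ) + 3) / (m + 1) * (1 - t) ^ (m + 1) - (1 - t) ^ (m + 2)))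
        (((m:ℝ) + 2) * (((m:ℝ) + 2) * t + 1) * (1 - t) ^ m) t := by
      intro t _
      have h0 : HasDerivAt (fun t : ℝ => 1 - t) (-1) t := by
        simpa using (hasDerivAt_id t).const_sub 1
      have h := (((h0.pow (m + 1)).const_mul (((m:ℝ) + 3) / (m + 1))).sub
        (h0.pow (m + 2))).const_mul (-((m:ℝ) + 2))
      refine h.congr_deriv ?_
      have e : m + 2 - 1 = m + 1 := by omega
      rw [e, Nat.add_sub_cancel]
      push_cast
      field_simp
      ring
    rw [intervalIntegral.integral_eq_sub_of_hasDerivAt hd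
      (Continuous.intervalIntegrable (by fun_prop) _ _)]
    simp
    field_simp
    ring
  calc _ ≤ ∫ t in (0:ℝ)..1, ((m:ℝ) + 2) * (((m:ℝ) + 2) * t + 1) * (1 - t) ^ m := by
        apply intervalIntegral.integral_mono_on zero_le_one
          (Continuous.intervalIntegrable (by fun_prop) _ _)
          (Continuous.intervalIntegrable (by fun_prop) _ _)
        intro t ht
        have h1 : (0:ℝ) ≤ 1 - t := by linarith [ht.2]
        have h2 : 0 ≤ ((m:ℝ) + 2) * t := mul_nonneg (by positivity) ht.1
        rw [abs_mul, abs_mul, abs_of_nonneg (pow_nonneg h1 m),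
          abs_of_nonneg (by positivity : (0:ℝ) ≤ m + 2)]
        gcongr
        rw [abs_le]
        constructor <;> linarith
    _ = _ := key
    _ ≤ 4 := by
        rw [div_le_iff₀ (by positivity)]
        linarith
end
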